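/- The preadapted switch distribution is weakly universal: for every stationary probability measure Q on Ω = {1,...,D}^ℤ, lim_{n→∞} (1/n)·E_Q[−log P(X_1^n)] = h_Q. -/

import Mathlib

open Filter MeasureTheory
open scoped Topology

/-- Number of occurrences `c(w|z)` of `w` as a substring of `z`. -/
def cnt {D : ℕ} (w z : List (Fin D)) : ℕ :=
  ((List.range (z.length - w.length + 1)).filter
    (fun i => (z.drop i).take w.length = w)).length

/-- Count `c(w | z_1^{m-1})` of `w` in the string `z` with its last symbol removed,
with the convention that counting in a block of length `-1` (i.e. when `z` itself is
empty) gives `0`. -/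
def cntPred {D : ℕ} (w z : List (Fin D)) : ℕ :=
  if z = [] then 0 else cnt w z.dropLast

/-- The prefix `x_1^n` of the one-sided sequence `x` (0-indexed: `x i = x_{i+1}`). -/
def pref {D : ℕ} (x : ℕ → Fin D) (n : ℕ) : List (Fin D) :=
  (List.range n).map x

/-- Adaptive Markov predictor: the natural-number index corresponds to the Markov
order shifted by one, so `Bpred D xs a (k+1) = B(a | xs, k)` and
`Bpred D xs a 0 = B(a | xs, -1) = 1/D`, where
`B(x_{n+1}|x_1^n, k) = (c(x_{n+1-k}^{n+1}|x_1^n) + B(x_{n+1}|x_1^n, k-1)) /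
(c(x_{n+1-k}^{n}|x_1^{n-1}) + 1)`.  Counts of substrings whose indices fall outside
the string are taken to be zero. -/
noncomputable def Bpred (D : ℕ) (xs : List (Fin D)) (a : Fin D) : ℕ → ℝ
  | 0 => 1 / D
  | k + 1 =>
    if k ≤ xs.length then
      ((cnt (xs.drop (xs.length - k) ++ [a]) xs : ℝ) + Bpred D xs a k) /
      ((cntPred (xs.drop (xs.length - k)) xs : ℝ) + 1)
    else Bpred D xs a k

/-- Preadapted Markov predictor with training data `y`: the natural-number index
corresponds to the Markov order shifted by one, so `BpredPre D y xs a (k+1) = B(a|xs,k)`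
and `BpredPre D y xs a 0 = 1/D`, where
`B(x_{n+1}|x_1^n, k) = (c(x_{n+1-k}^{n+1}|y_1^j x_1^n) + B(x_{n+1}|x_1^n, k-1)) /
(c(x_{n+1-k}^{n}|y_1^j x_1^{n-1}) + 1)`: counts are taken in the concatenated string,
and counts of substrings whose indices fall outside the available string are zero. -/
noncomputable def BpredPre (D : ℕ) (y xs : List (Fin D)) (a : Fin D) : ℕ → ℝ
  | 0 => 1 / D
  | k + 1 =>
    if k ≤ xs.length then
      ((cnt (xs.drop (xs.length - k) ++ [a]) (y ++ xs) : ℝ) + BpredPre D y xs a k) /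
      ((cntPred (xs.drop (xs.length - k)) (y ++ xs) : ℝ) + 1)
    else BpredPre D y xs a k

/-- Partial preadapted switch distribution `P(x_1^n, k)` with Markov order `k : ℤ`. -/
noncomputable def PpartPre (D : ℕ) (p : ℕ → ℝ) (y : List (Fin D)) (x : ℕ → Fin D) :
    ℕ → ℤ → ℝ
  | 0, _ => 0
  | 1, k =>
    if k = -1 then p 0 * BpredPre D y [] (x 0) 0
    else if k = 0 then (1 - p 0) * BpredPre D y [] (x 0) 1
    else 0
  | n + 2, k =>
    if -1 ≤ k ∧ k ≤ (n : ℤ) + 1 then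
      (p (n + 1) * PpartPre D p y x (n + 1) k +
        (1 - p (n + 1)) * PpartPre D p y x (n + 1) (k - 1)) *
        BpredPre D y (pref x (n + 1)) (x (n + 1)) (k + 1).toNat
    else 0

/-- The preadapted switch distribution `P(x_1^n) = Σ_{k=-1}^{n-1} P(x_1^n, k)`. -/
noncomputable def swPre (D : ℕ) (p : ℕ → ℝ) (y : List (Fin D)) (x : ℕ → Fin D) (n : ℕ) : ℝ :=
  ∑ kk ∈ Finset.range (n + 1), PpartPre D p y x n ((kk : ℤ) - 1)

/-- The two-sided sequence space `Ω = {1,...,D}^ℤ` with the product σ-algebra. -/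
abbrev Omega (D : ℕ) := ℤ → Fin D

/-- The shift `T : Ω → Ω`. -/
def shiftT (D : ℕ) : Omega D → Omega D := fun ω i => ω (i + 1)

/-- The cylinder set `{X_1 = x 0, ..., X_n = x (n-1)}`. -/
def cylSet (D : ℕ) (x : ℕ → Fin D) (n : ℕ) : Set (Omega D) :=
  {ω | ∀ i < n, ω ((i : ℤ) + 1) = x i}

/-- The one-sided sample path `X_1, X_2, ...` of `ω` (0-indexed). -/
def path (D : ℕ) (ω : Omega D) : ℕ → Fin D := fun i => ω ((i : ℤ) + 1)

/-- The cylinder probability `Q(x_1^n)`. -/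
noncomputable def Qstr (D : ℕ) (Q : Measure (Omega D)) (x : ℕ → Fin D) (n : ℕ) : ℝ :=
  (Q (cylSet D x n)).toReal

/-!
Lower bound: the switch distribution is a probability distribution on words of each positive
length, so by Gibbs' inequality its expected code length is at least the block entropy.

Upper bound: the switch distribution `P(x_1^n)` is at least the weight of the single history that
raises the order from `-1` to `k` as fast as possible and then never switches, which is a constant
times `∏_{t < n} p_t` times the product of the order-`k` predictions. For any positive `k`-th order
Markov kernel `θ`, the order-`k` predictor codes `x_1^n` at most `O(log n)` worse than `θ`: within
one context the logarithms of the predictions telescope to those of factorials, up to `O(log n)`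
for the first occurrence of each symbol, and the resulting multinomial coefficient times
`∏_a θ(a)^{c_a}` is at most `1` as a term of the multinomial expansion of `(∑_a θ(a))^n`. Taking for
`θ` the conditional probabilities of `Q`, mixed slightly with the uniform distribution to make them
positive, and using stationarity bounds the rate by `H(X_1^{k+1}) - H(X_1^k) + η`; some such
increment is close to `h_Q` because the averages `H(X_1^n) / n` of the increments converge to it.
-/

section Counts

variable {D : ℕ}

lemma cnt_of_length_le {w z : List (Fin D)} (h : z.length ≤ w.length) :
    cnt w z = if w = z then 1 else 0 := by
  by_cases hwz : w = z <;>
    simp [cnt, Nat.sub_eq_zero_of_le h, List.take_of_length_le h, eq_comm (a := z), hwz]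

lemma cnt_append_singleton (w z : List (Fin D)) (b : Fin D) :
    cnt w (z ++ [b]) = cnt w z + if w <:+ z ++ [b] then 1 else 0 := by
  rcases le_or_gt w.length z.length with h | h
  · have hlen : (z ++ [b]).length - w.length = z.length - w.length + 1 := by
      simp only [List.length_append, List.length_singleton]
      omega
    have hold : ∀ i ∈ List.range (z.length - w.length + 1),
        decide (((z ++ [b]).drop i).take w.length = w) = decide ((z.drop i).take w.length = w) := by
      intro i hi
      have hi := List.mem_range.1 hi
      rw [List.drop_append_of_le_length (by omega),
        List.take_append_of_le_length (by rw [List.length_drop]; omega)]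
    have hlast : ((z ++ [b]).drop (z.length - w.length + 1)).take w.length =
        (z ++ [b]).drop (z.length - w.length + 1) := by
      refine List.take_of_length_le ?_
      rw [List.length_drop]
      omega
    have hsuffix : w <:+ z ++ [b] ↔ (z ++ [b]).drop (z.length - w.length + 1) = w := by
      rw [List.suffix_iff_eq_drop, hlen, eq_comm]
    rw [cnt, hlen, List.range_succ, List.filter_append, List.length_append,
      List.filter_congr hold, ← cnt, List.filter_singleton, hlast]
    by_cases hw : (z ++ [b]).drop (z.length - w.length + 1) = w <;> simp [hsuffix, hw]
  · have hsuffix : w <:+ z ++ [b] ↔ w = z ++ [b] :=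
      ⟨fun hs => hs.eq_of_length_le (by simpa using h), fun hw => hw ▸ List.suffix_rfl⟩
    have hne : w ≠ z := by
      rintro rfl
      exact h.false
    rw [cnt_of_length_le h.le, cnt_of_length_le (by simpa using h), if_neg hne, zero_add]
    simp only [hsuffix]

lemma cntPred_append_singleton (w z : List (Fin D)) (b : Fin D) :
    cntPred w (z ++ [b]) = cnt w z := by
  simp [cntPred]

lemma cnt_eq_cntPred_add (w z : List (Fin D)) :
    cnt w z = cntPred w z + if w <:+ z then 1 else 0 := by
  induction z using List.reverseRecOn with
  | nil => simp [cnt_of_length_le, cntPred]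
  | append_singleton z b _ => rw [cnt_append_singleton, cntPred_append_singleton]

lemma cntPred_le_length (w z : List (Fin D)) : cntPred w z ≤ z.length := by
  induction z using List.reverseRecOn with
  | nil => simp [cntPred]
  | append_singleton z b ih =>
    rw [cntPred_append_singleton, cnt_eq_cntPred_add, List.length_append, List.length_singleton]
    split_ifs <;> omega

lemma append_singleton_suffix_append_singleton {α : Type*} {w z : List α} {a b : α} :
    w ++ [a] <:+ z ++ [b] ↔ w <:+ z ∧ a = b := by
  simp only [List.suffix_concat_iff, List.append_eq_nil_iff, List.cons_ne_nil, and_false,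
    List.append_singleton_inj, false_or]
  exact ⟨fun ⟨_, ⟨hw, ha⟩, hz⟩ => ⟨hw ▸ hz, ha⟩, fun ⟨hz, ha⟩ => ⟨w, ⟨rfl, ha⟩, hz⟩⟩

lemma sum_cnt_append_singleton (w z : List (Fin D)) :
    ∑ a, cnt (w ++ [a]) z = cntPred w z := by
  induction z using List.reverseRecOn with
  | nil => simp [cnt_of_length_le, cntPred]
  | append_singleton z b ih =>
    simp_rw [cnt_append_singleton, Finset.sum_add_distrib, ih,
      append_singleton_suffix_append_singleton, cntPred_append_singleton, cnt_eq_cntPred_add]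
    by_cases h : w <:+ z <;> simp [h]

lemma pref_succ (x : ℕ → Fin D) (n : ℕ) : pref x (n + 1) = pref x n ++ [x n] := by
  simp [pref, List.range_succ]

lemma length_pref (x : ℕ → Fin D) (n : ℕ) : (pref x n).length = n := by
  simp [pref]

lemma pref_dependsOn (n : ℕ) : DependsOn (fun x : ℕ → Fin D => pref x n) (Set.Iio n) :=
  fun _ _ h => List.map_congr_left fun i hi => h i (List.mem_range.1 hi)

end Counts

section Predictor

variable {D : ℕ}

lemma sum_BpredPre [NeZero D] (y xs : List (Fin D)) (k : ℕ) :
    ∑ a, BpredPre D y xs a k = 1 := by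
  induction k with
  | zero => simp [BpredPre]
  | succ k ih =>
    simp only [BpredPre]
    split_ifs
    · rw [← Finset.sum_div, Finset.sum_add_distrib, ih, ← sum_cnt_append_singleton, Nat.cast_sum]
      exact div_self (by positivity)
    · exact ih

lemma one_div_le_BpredPre (y xs : List (Fin D)) (a : Fin D) (k : ℕ) :
    1 / (D * ((y.length : ℝ) + xs.length + 1) ^ k) ≤ BpredPre D y xs a k := by
  have hD : (0 : ℝ) < D := by exact_mod_cast a.pos
  induction k with
  | zero => simp [BpredPre]
  | succ k ih =>
    simp only [BpredPre]
    split_ifs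
    · rw [pow_succ, ← mul_assoc, ← div_div]
      have hcount : (cntPred (xs.drop (xs.length - k)) (y ++ xs) : ℝ) ≤ y.length + xs.length := by
        exact_mod_cast (cntPred_le_length _ _).trans_eq List.length_append
      have hnum : 1 / (D * ((y.length : ℝ) + xs.length + 1) ^ k) ≤
          cnt (xs.drop (xs.length - k) ++ [a]) (y ++ xs) + BpredPre D y xs a k :=
        ih.trans (le_add_of_nonneg_left (Nat.cast_nonneg _))
      exact div_le_div₀ (le_trans (by positivity) hnum) hnum (by positivity) (by linarith)
    · refine le_trans ?_ ih
      gcongr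
      · exact le_add_of_nonneg_left (by positivity)
      · exact k.le_succ

lemma BpredPre_pos (y xs : List (Fin D)) (a : Fin D) (k : ℕ) : 0 < BpredPre D y xs a k := by
  have hD : (0 : ℝ) < D := by exact_mod_cast a.pos
  exact lt_of_lt_of_le (by positivity) (one_div_le_BpredPre y xs a k)

lemma neg_log_BpredPre_le (y xs : List (Fin D)) (a : Fin D) (k : ℕ) :
    -Real.log (BpredPre D y xs a k) ≤
      Real.log D + k * Real.log ((y.length : ℝ) + xs.length + 1) := by
  have hD : (0 : ℝ) < D := by exact_mod_cast a.pos
  have hlog := Real.log_le_log (by positivity) (one_div_le_BpredPre y xs a k)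
  rw [one_div, Real.log_inv, Real.log_mul hD.ne' (by positivity), Real.log_pow] at hlog
  linarith

end Predictor

section EscapePotential

variable {α : Type*}

/-- Contribution of a symbol that has occurred `c` times to `escapePotential`: `E` bounds the cost
of the first occurrence, each further occurrence costs minus the logarithm of the number of
preceding ones, hence `(c - 1)!`, and the code length `c * -log θ` is subtracted. The truncated
subtraction makes the value at `c = 0` vanish. -/
noncomputable def symbolPotential (θ E : ℝ) (c : ℕ) : ℝ :=
  (if c = 0 then 0 else E) - Real.log (c - 1).factorial + c * Real.log θ

lemma log_sub_log_add_le_symbolPotential_succ_sub {θ E β : ℝ} (hβ : 0 < β)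
    (hE : -Real.log β ≤ E) (c : ℕ) :
    Real.log θ - Real.log (c + β) ≤ symbolPotential θ E (c + 1) - symbolPotential θ E c := by
  rcases c with _ | c
  · suffices Real.log θ - Real.log β ≤ E + Real.log θ by simpa [symbolPotential]
    linarith
  · have hlog : Real.log (c + 1) ≤ Real.log (c + 1 + β) :=
      Real.log_le_log (by positivity) (by linarith)
    simp only [symbolPotential, Nat.add_sub_cancel, Nat.factorial_succ, Nat.add_eq_zero_iff,
      one_ne_zero, and_false, if_false]
    push_cast
    rw [Real.log_mul (by positivity) (by positivity)]
    linarith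

lemma log_factorial_le {c T : ℕ} (h : c ≤ T) :
    Real.log c.factorial ≤ Real.log (c - 1).factorial + Real.log T := by
  rcases c with _ | c
  · simp [Real.log_natCast_nonneg]
  · rw [Nat.add_sub_cancel, Nat.factorial_succ, Nat.cast_mul,
      Real.log_mul (by positivity) (by positivity), add_comm]
    gcongr

lemma symbolPotential_le {E : ℝ} (hE : 0 ≤ E) (θ : ℝ) {c T : ℕ} (h : c ≤ T) :
    symbolPotential θ E c ≤ Real.log T + E + (c * Real.log θ - Real.log c.factorial) := by
  have hfact := log_factorial_le h
  unfold symbolPotential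
  split_ifs <;> linarith

lemma neg_symbolPotential_le {E : ℝ} (hE : 0 ≤ E) (θ : ℝ) {c T : ℕ} (h : c ≤ T) :
    -symbolPotential θ E c ≤ Real.log T.factorial + T * |Real.log θ| := by
  have hfact : Real.log (c - 1).factorial ≤ Real.log T.factorial := by
    gcongr
    omega
  have hlog : -(c * Real.log θ) ≤ T * |Real.log θ| :=
    calc -(c * Real.log θ) = c * -Real.log θ := (mul_neg _ _).symm
      _ ≤ c * |Real.log θ| := by gcongr; exact neg_le_abs _
      _ ≤ T * |Real.log θ| := by gcongr
  unfold symbolPotential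
  split_ifs <;> linarith

variable [Fintype α]

/-- Bound on the total code length of an adaptive predictor that has seen the counts `c`, in excess
of the code length under the fixed distribution `θ`. -/
noncomputable def escapePotential (θ : α → ℝ) (E : ℝ) (c : α → ℕ) : ℝ :=
  Real.log (∑ a, c a).factorial + ∑ a, symbolPotential (θ a) E (c a)

lemma neg_log_add_log_le_escapePotential_sub [DecidableEq α] {E β : ℝ} (hβ : 0 < β)
    (hE : -Real.log β ≤ E) (θ : α → ℝ) (c : α → ℕ) (b : α) :
    -Real.log ((c b + β) / (↑(∑ a, c a) + 1)) + Real.log (θ b) ≤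
      escapePotential θ E (c + Pi.single b 1) - escapePotential θ E c := by
  have hfact : Real.log (∑ a, (c + Pi.single b 1 : α → ℕ) a).factorial =
      Real.log (↑(∑ a, c a) + 1) + Real.log (∑ a, c a).factorial := by
    simp only [Pi.add_apply, Finset.sum_add_distrib, Finset.sum_pi_single', Finset.mem_univ,
      if_true, Nat.factorial_succ, Nat.cast_mul, Nat.cast_add_one]
    exact Real.log_mul (by positivity) (by positivity)
  have hsymbol : ∑ a, symbolPotential (θ a) E ((c + Pi.single b 1 : α → ℕ) a) -
      ∑ a, symbolPotential (θ a) E (c a) =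
        symbolPotential (θ b) E (c b + 1) - symbolPotential (θ b) E (c b) := by
    rw [← Finset.sum_sub_distrib, Fintype.sum_eq_single b fun a ha => by simp [ha]]
    simp
  have hstep := log_sub_log_add_le_symbolPotential_succ_sub (θ := θ b) hβ hE (c b)
  rw [Real.log_div (by positivity) (by positivity), escapePotential, escapePotential, hfact]
  linarith

lemma multinomial_mul_prod_pow_le_one {θ : α → ℝ} (hθ : ∀ a, 0 ≤ θ a) (hsum : ∑ a, θ a ≤ 1)
    (c : α → ℕ) : Nat.multinomial Finset.univ c * ∏ a, θ a ^ c a ≤ 1 := by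
  classical
  calc Nat.multinomial Finset.univ c * ∏ a, θ a ^ c a
    _ ≤ ∑ k ∈ Finset.univ.piAntidiag (∑ a, c a),
          Nat.multinomial Finset.univ k * ∏ a, θ a ^ k a :=
        Finset.single_le_sum
          (f := fun k : α → ℕ => (Nat.multinomial Finset.univ k : ℝ) * ∏ a, θ a ^ k a)
          (fun k _ => mul_nonneg (Nat.cast_nonneg _)
            (Finset.prod_nonneg fun a _ => pow_nonneg (hθ a) _))
          (by simp [Finset.mem_piAntidiag])
    _ = (∑ a, θ a) ^ ∑ a, c a := (Finset.sum_pow_eq_sum_piAntidiag _ _ _).symm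
    _ ≤ 1 := pow_le_one₀ (Finset.sum_nonneg fun a _ => hθ a) hsum

lemma log_factorial_sum_add_le {θ : α → ℝ} (hθ : ∀ a, 0 < θ a) (hsum : ∑ a, θ a ≤ 1)
    (c : α → ℕ) :
    Real.log (∑ a, c a).factorial + ∑ a, c a * Real.log (θ a) ≤
      ∑ a, Real.log (c a).factorial := by
  have hprod : 0 < ∏ a, θ a ^ c a := Finset.prod_pos fun a _ => pow_pos (hθ a) _
  have hle : ((∑ a, c a).factorial : ℝ) * ∏ a, θ a ^ c a ≤ ∏ a, ((c a).factorial : ℝ) := by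
    rw [← Nat.multinomial_spec, Nat.cast_mul, Nat.cast_prod, mul_assoc]
    exact mul_le_of_le_one_right (by positivity)
      (multinomial_mul_prod_pow_le_one (fun a => (hθ a).le) hsum c)
  have hlog := Real.log_le_log (by positivity) hle
  rw [Real.log_mul (by positivity) hprod.ne', Real.log_prod fun a _ => (pow_pos (hθ a) _).ne',
    Real.log_prod fun a _ => by positivity] at hlog
  simpa only [Real.log_pow] using hlog

lemma escapePotential_le {θ : α → ℝ} (hθ : ∀ a, 0 < θ a) (hsum : ∑ a, θ a ≤ 1)
    {E : ℝ} (hE : 0 ≤ E) {c : α → ℕ} {T : ℕ} (h : ∀ a, c a ≤ T) :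
    escapePotential θ E c ≤ Fintype.card α * (Real.log T + E) := by
  have hmultinomial := log_factorial_sum_add_le hθ hsum c
  have hsymbol := Finset.sum_le_sum fun a (_ : a ∈ Finset.univ) =>
    symbolPotential_le hE (θ a) (h a)
  simp only [Finset.sum_add_distrib, Finset.sum_sub_distrib, Finset.sum_const, Finset.card_univ,
    nsmul_eq_mul] at hsymbol
  rw [escapePotential]
  linarith

lemma neg_escapePotential_le (θ : α → ℝ) {E : ℝ} (hE : 0 ≤ E) {c : α → ℕ} {T : ℕ}
    (h : ∀ a, c a ≤ T) :
    -escapePotential θ E c ≤ ∑ a, (Real.log T.factorial + T * |Real.log (θ a)|) := by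
  have hsymbol := Finset.sum_le_sum fun a (_ : a ∈ Finset.univ) =>
    neg_symbolPotential_le hE (θ a) (h a)
  have hfact := Real.log_natCast_nonneg (∑ a, c a).factorial
  rw [Finset.sum_neg_distrib] at hsymbol
  rw [escapePotential]
  linarith

end EscapePotential

section ContextPotential

variable {D k : ℕ}

/-- How often each symbol followed the word `w` in the string `z`. -/
def followCount (z : List (Fin D)) (w : Fin k → Fin D) (a : Fin D) : ℕ :=
  cnt (List.ofFn w ++ [a]) z

/-- Excess, over the `k`-th order Markov model `θ`, of the code length of an order-`k` adaptive
predictor on the string `z`: each context `w` carries its own predictor. -/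
noncomputable def contextPotential (θ : (Fin k → Fin D) → Fin D → ℝ) (E : ℝ)
    (z : List (Fin D)) : ℝ :=
  ∑ w, escapePotential (θ w) E (followCount z w)

lemma sum_followCount (z : List (Fin D)) (w : Fin k → Fin D) :
    ∑ a, followCount z w a = cntPred (List.ofFn w) z :=
  sum_cnt_append_singleton _ _

lemma followCount_le_length (z : List (Fin D)) (w : Fin k → Fin D) (a : Fin D) :
    followCount z w a ≤ z.length :=
  calc followCount z w a
    _ ≤ ∑ b, followCount z w b :=
        Finset.single_le_sum (fun _ _ => Nat.zero_le _) (Finset.mem_univ a)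
    _ ≤ z.length := (sum_followCount z w).trans_le (cntPred_le_length _ _)

lemma ofFn_suffix_unique {α : Type*} {v w : Fin k → α} {z : List α} (hv : List.ofFn v <:+ z)
    (hw : List.ofFn w <:+ z) : v = w :=
  List.ofFn_injective
    ((List.suffix_of_suffix_length_le hv hw (by simp)).eq_of_length (by simp))

lemma followCount_append_singleton_self {z : List (Fin D)} {w : Fin k → Fin D}
    (hw : List.ofFn w <:+ z) (b : Fin D) :
    followCount (z ++ [b]) w = followCount z w + Pi.single b 1 := by
  ext a
  simp [followCount, cnt_append_singleton, append_singleton_suffix_append_singleton, hw,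
    Pi.single_apply]

lemma followCount_append_singleton_of_ne {z : List (Fin D)} {v w : Fin k → Fin D}
    (hw : List.ofFn w <:+ z) (hvw : v ≠ w) (b : Fin D) :
    followCount (z ++ [b]) v = followCount z v := by
  have hv : ¬ List.ofFn v <:+ z := fun hv => hvw (ofFn_suffix_unique hv hw)
  ext a
  simp [followCount, cnt_append_singleton, append_singleton_suffix_append_singleton, hv]

lemma contextPotential_append_singleton_sub (θ : (Fin k → Fin D) → Fin D → ℝ) (E : ℝ)
    {z : List (Fin D)} {w : Fin k → Fin D} (hw : List.ofFn w <:+ z) (b : Fin D) :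
    contextPotential θ E (z ++ [b]) - contextPotential θ E z =
      escapePotential (θ w) E (followCount z w + Pi.single b 1) -
        escapePotential (θ w) E (followCount z w) := by
  rw [contextPotential, contextPotential, ← Finset.sum_sub_distrib,
    Fintype.sum_eq_single w fun v hvw => by
      rw [followCount_append_singleton_of_ne hw hvw, sub_self],
    followCount_append_singleton_self hw]

lemma contextPotential_le {θ : (Fin k → Fin D) → Fin D → ℝ} (hθ : ∀ w a, 0 < θ w a)
    (hsum : ∀ w, ∑ a, θ w a ≤ 1) {E : ℝ} (hE : 0 ≤ E) (z : List (Fin D)) :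
    contextPotential θ E z ≤ D ^ k * (D * (Real.log z.length + E)) := by
  have hword := Finset.sum_le_sum fun w (_ : w ∈ Finset.univ) =>
    escapePotential_le (hθ w) (hsum w) hE (followCount_le_length z w)
  simpa [contextPotential] using hword

lemma neg_contextPotential_le (θ : (Fin k → Fin D) → Fin D → ℝ) {E : ℝ} (hE : 0 ≤ E)
    (z : List (Fin D)) :
    -contextPotential θ E z ≤
      ∑ w, ∑ a, (Real.log z.length.factorial + z.length * |Real.log (θ w a)|) := by
  rw [contextPotential, ← Finset.sum_neg_distrib]
  exact Finset.sum_le_sum fun w _ => neg_escapePotential_le (θ w) hE (followCount_le_length z w)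

end ContextPotential

section MarkovCodeLength

variable {D : ℕ}

/-- The `k` symbols of `x` preceding time `t`; meaningful for `k ≤ t` only, as `t - k` truncates. -/
def contextWord {α : Type*} (k : ℕ) (x : ℕ → α) (t : ℕ) : Fin k → α :=
  fun i => x (t - k + i)

lemma drop_pref_eq_ofFn_contextWord {k t : ℕ} (hkt : k ≤ t) (x : ℕ → Fin D) :
    (pref x t).drop (t - k) = List.ofFn (contextWord k x t) := by
  apply List.ext_getElem
  · simp [pref, Nat.sub_sub_self hkt]
  · simp [pref, contextWord]

lemma ofFn_contextWord_suffix {k t : ℕ} (hkt : k ≤ t) (y : List (Fin D)) (x : ℕ → Fin D) :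
    List.ofFn (contextWord k x t) <:+ y ++ pref x t := by
  rw [← drop_pref_eq_ofFn_contextWord hkt]
  exact (List.drop_suffix _ _).trans (List.suffix_append _ _)

lemma BpredPre_succ_eq_div_followCount {k t : ℕ} (hkt : k ≤ t) (y : List (Fin D))
    (x : ℕ → Fin D) (a : Fin D) :
    BpredPre D y (pref x t) a (k + 1) =
      (followCount (y ++ pref x t) (contextWord k x t) a + BpredPre D y (pref x t) a k) /
        (↑(∑ b, followCount (y ++ pref x t) (contextWord k x t) b) + 1) := by
  rw [BpredPre, length_pref, if_pos hkt, drop_pref_eq_ofFn_contextWord hkt, sum_followCount,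
    followCount]

lemma neg_log_BpredPre_add_log_le_contextPotential_sub {k t : ℕ} (hkt : k ≤ t)
    (θ : (Fin k → Fin D) → Fin D → ℝ) {E : ℝ} (y : List (Fin D)) (x : ℕ → Fin D)
    (hE : -Real.log (BpredPre D y (pref x t) (x t) k) ≤ E) :
    -Real.log (BpredPre D y (pref x t) (x t) (k + 1)) +
        Real.log (θ (contextWord k x t) (x t)) ≤
      contextPotential θ E (y ++ pref x (t + 1)) - contextPotential θ E (y ++ pref x t) := by
  rw [pref_succ, ← List.append_assoc,
    contextPotential_append_singleton_sub θ E (ofFn_contextWord_suffix hkt y x),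
    BpredPre_succ_eq_div_followCount hkt]
  exact neg_log_add_log_le_escapePotential_sub (BpredPre_pos _ _ _ _) hE _ _ _

lemma sum_neg_log_BpredPre_add_log_le_contextPotential_sub {k m n : ℕ} (hkm : k ≤ m) (hmn : m ≤ n)
    (θ : (Fin k → Fin D) → Fin D → ℝ) {E : ℝ} (y : List (Fin D)) (x : ℕ → Fin D)
    (hE : ∀ t < n, -Real.log (BpredPre D y (pref x t) (x t) k) ≤ E) :
    ∑ t ∈ Finset.Ico m n, (-Real.log (BpredPre D y (pref x t) (x t) (k + 1)) +
        Real.log (θ (contextWord k x t) (x t))) ≤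
      contextPotential θ E (y ++ pref x n) - contextPotential θ E (y ++ pref x m) := by
  rw [← Finset.sum_Ico_sub (fun t => contextPotential θ E (y ++ pref x t)) hmn]
  refine Finset.sum_le_sum fun t ht => ?_
  obtain ⟨hmt, htn⟩ := Finset.mem_Ico.1 ht
  exact neg_log_BpredPre_add_log_le_contextPotential_sub (hkm.trans hmt) θ y x (hE t htn)

lemma exists_sum_neg_log_BpredPre_le {k m : ℕ} (hkm : k ≤ m) (y : List (Fin D))
    {θ : (Fin k → Fin D) → Fin D → ℝ} (hθ : ∀ w a, 0 < θ w a) (hsum : ∀ w, ∑ a, θ w a ≤ 1) :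
    ∃ A K : ℝ, ∀ n ≥ m, ∀ x : ℕ → Fin D,
      ∑ t ∈ Finset.Ico m n, -Real.log (BpredPre D y (pref x t) (x t) (k + 1)) ≤
        A + K * Real.log (y.length + n) +
          ∑ t ∈ Finset.Ico m n, -Real.log (θ (contextWord k x t) (x t)) := by
  refine ⟨D ^ k * (D * Real.log D) + ∑ w, ∑ a, (Real.log (y.length + m).factorial +
    ↑(y.length + m) * |Real.log (θ w a)|), D ^ k * (D * (k + 1)), fun n hmn x => ?_⟩
  have hlog : 0 ≤ Real.log (y.length + n) := by
    exact_mod_cast Real.log_natCast_nonneg (y.length + n)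
  set E : ℝ := Real.log D + k * Real.log (y.length + n)
  have hE : 0 ≤ E := add_nonneg (Real.log_natCast_nonneg D) (by positivity)
  have hescape : ∀ t < n, -Real.log (BpredPre D y (pref x t) (x t) k) ≤ E := by
    intro t ht
    have htn : (y.length : ℝ) + (pref x t).length + 1 ≤ y.length + n := by
      rw [length_pref]
      exact_mod_cast (by omega : y.length + t + 1 ≤ y.length + n)
    refine (neg_log_BpredPre_le y (pref x t) (x t) k).trans ?_
    change _ ≤ Real.log D + k * Real.log (y.length + n)
    gcongr
  have htelescope := sum_neg_log_BpredPre_add_log_le_contextPotential_sub hkm hmn θ y x hescape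
  have hfinal := contextPotential_le hθ hsum hE (y ++ pref x n)
  have hinit := neg_contextPotential_le θ hE (y ++ pref x m)
  simp only [List.length_append, length_pref] at hfinal hinit
  rw [Finset.sum_add_distrib] at htelescope
  rw [Finset.sum_neg_distrib fun t => Real.log (θ (contextWord k x t) (x t))]
  push_cast at hfinal
  linear_combination htelescope + hfinal + hinit

end MarkovCodeLength

section SwitchDistribution

variable {D : ℕ} {p : ℕ → ℝ}

lemma PpartPre_nonneg (hp : ∀ n, p n ∈ Set.Icc (0 : ℝ) 1) (y : List (Fin D)) (x : ℕ → Fin D)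
    (n : ℕ) (k : ℤ) : 0 ≤ PpartPre D p y x n k := by
  have hB : ∀ xs a l, 0 ≤ BpredPre D y xs a l := fun xs a l => (BpredPre_pos y xs a l).le
  have hq : ∀ n, 0 ≤ 1 - p n := fun n => sub_nonneg.2 (hp n).2
  fun_induction PpartPre D p y x n k with
  | case1 => exact le_rfl
  | case2 => exact mul_nonneg (hp 0).1 (hB _ _ _)
  | case3 => exact mul_nonneg (hq 0) (hB _ _ _)
  | case4 => exact le_rfl
  | case5 n k _ ih ih' =>
    exact mul_nonneg (add_nonneg (mul_nonneg (hp _).1 ih) (mul_nonneg (hq _) ih')) (hB _ _ _)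
  | case6 => exact le_rfl

lemma PpartPre_eq_zero (y : List (Fin D)) (x : ℕ → Fin D) {n : ℕ} {k : ℤ}
    (hk : k < -1 ∨ n ≤ k) : PpartPre D p y x n k = 0 := by
  rcases n with _ | _ | n
  · rfl
  · rw [PpartPre, if_neg (by omega), if_neg (by omega)]
  · rw [PpartPre, if_neg (by omega)]

lemma PpartPre_dependsOn (p : ℕ → ℝ) (y : List (Fin D)) (n : ℕ) (k : ℤ) :
    DependsOn (fun x => PpartPre D p y x n k) (Set.Iio n) := by
  intro x x' h
  induction n generalizing k with
  | zero => rfl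
  | succ n ih =>
    have hpref : pref x n = pref x' n :=
      pref_dependsOn n fun i hi => h i (Set.mem_Iio.1 hi |>.trans n.lt_succ_self)
    have ih := fun l => ih l fun i hi => h i (Set.mem_Iio.1 hi |>.trans n.lt_succ_self)
    have hlast : x n = x' n := h n (Set.mem_Iio.2 n.lt_succ_self)
    rcases n with _ | n
    · simp only [PpartPre, hlast]
    · simp only at ih
      simp only [PpartPre, ih, hpref, hlast]

lemma PpartPre_le_swPre (hp : ∀ n, p n ∈ Set.Icc (0 : ℝ) 1) (y : List (Fin D))
    (x : ℕ → Fin D) {k n : ℕ} (hkn : k < n) : PpartPre D p y x n k ≤ swPre D p y x n := by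
  have hle := Finset.single_le_sum (f := fun l : ℕ => PpartPre D p y x n ((l : ℤ) - 1))
    (fun l _ => PpartPre_nonneg hp y x n _) (Finset.mem_range.2 (Nat.succ_lt_succ hkn))
  simpa [swPre] using hle

lemma PpartPre_succ (y : List (Fin D)) (x : ℕ → Fin D) {n l : ℕ} (hn : n ≠ 0) (hl : l ≤ n + 1) :
    PpartPre D p y x (n + 1) ((l : ℤ) - 1) =
      (p n * PpartPre D p y x n ((l : ℤ) - 1) + (1 - p n) * PpartPre D p y x n ((l : ℤ) - 1 - 1)) *
        BpredPre D y (pref x n) (x n) l := by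
  obtain ⟨n, rfl⟩ := Nat.exists_eq_succ_of_ne_zero hn
  rw [PpartPre, if_pos (by omega), sub_add_cancel, Int.toNat_natCast]

lemma exists_pos_le_PpartPre_diagonal [NeZero D] (hp : ∀ n, p n ∈ Set.Ioo (0 : ℝ) 1)
    (y : List (Fin D)) (k : ℕ) : ∃ c > 0, ∀ x : ℕ → Fin D, c ≤ PpartPre D p y x (k + 1) k := by
  have hq : ∀ n, 0 < 1 - p n := fun n => sub_pos.2 (hp n).2
  have hD : (0 : ℝ) < D := by exact_mod_cast NeZero.pos D
  induction k with
  | zero =>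
    refine ⟨(1 - p 0) * (1 / (D * ((y.length : ℝ) + ([] : List (Fin D)).length + 1) ^ 1)),
      mul_pos (hq 0) (by positivity), fun x => ?_⟩
    simpa [PpartPre] using mul_le_mul_of_nonneg_left (one_div_le_BpredPre y [] (x 0) 1) (hq 0).le
  | succ k ih =>
    obtain ⟨c, hc, hdiag⟩ := ih
    refine ⟨(1 - p (k + 1)) * c * (1 / (D * ((y.length : ℝ) + (k + 1 : ℕ) + 1) ^ (k + 2))),
      mul_pos (mul_pos (hq _) hc) (by positivity), fun x => ?_⟩
    have hB := one_div_le_BpredPre y (pref x (k + 1)) (x (k + 1)) (k + 2)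
    rw [length_pref] at hB
    have hrec := PpartPre_succ (p := p) y x k.succ_ne_zero (le_refl (k + 2))
    have hstay := mul_nonneg (hp (k + 1)).1.le
      (PpartPre_nonneg (fun n => Set.Ioo_subset_Icc_self (hp n)) y x (k + 1) (k + 1 : ℕ))
    have hswitch := mul_le_mul_of_nonneg_left (hdiag x) (hq (k + 1)).le
    have hk : ((k + 2 : ℕ) : ℤ) - 1 = (k + 1 : ℕ) := by push_cast; ring
    rw [hk, Nat.cast_succ k, add_sub_cancel_right, ← Nat.cast_succ k] at hrec
    rw [hrec]
    exact mul_le_mul (by linarith) hB (by positivity)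
      (add_nonneg hstay ((mul_pos (hq _) hc).le.trans hswitch))

lemma PpartPre_mul_prod_le (hp : ∀ n, p n ∈ Set.Icc (0 : ℝ) 1) (y : List (Fin D))
    (x : ℕ → Fin D) {k m n : ℕ} (hkm : k < m) (hmn : m ≤ n) :
    PpartPre D p y x m k *
        ∏ t ∈ Finset.Ico m n, (p t * BpredPre D y (pref x t) (x t) (k + 1)) ≤
      PpartPre D p y x n k := by
  induction n, hmn using Nat.le_induction with
  | base => simp
  | succ n hmn ih =>
    have hrec := PpartPre_succ (p := p) y x (by omega : n ≠ 0) (by omega : k + 1 ≤ n + 1)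
    have hstay := mul_le_mul_of_nonneg_left ih (hp n).1
    have hswitch := mul_nonneg (sub_nonneg.2 (hp n).2) (PpartPre_nonneg hp y x n ((k : ℤ) - 1))
    rw [Nat.cast_succ, add_sub_cancel_right] at hrec
    rw [Finset.prod_Ico_succ_top hmn, hrec, ← mul_assoc, ← mul_assoc]
    exact mul_le_mul_of_nonneg_right (by linarith) (BpredPre_pos _ _ _ _).le

lemma swPre_pos (hp : ∀ n, p n ∈ Set.Ioo (0 : ℝ) 1) (y : List (Fin D)) (x : ℕ → Fin D) {n : ℕ}
    (hn : n ≠ 0) : 0 < swPre D p y x n := by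
  have : NeZero D := ⟨(x 0).pos.ne'⟩
  obtain ⟨k, rfl⟩ := Nat.exists_eq_succ_of_ne_zero hn
  obtain ⟨c, hc, hdiag⟩ := exists_pos_le_PpartPre_diagonal hp y k
  exact hc.trans_le ((hdiag x).trans
    (PpartPre_le_swPre (fun n => Set.Ioo_subset_Icc_self (hp n)) y x k.lt_succ_self))

lemma swPre_dependsOn (p : ℕ → ℝ) (y : List (Fin D)) (n : ℕ) :
    DependsOn (fun x => swPre D p y x n) (Set.Iio n) :=
  fun _ _ h => Finset.sum_congr rfl fun l _ => PpartPre_dependsOn p y n ((l : ℤ) - 1) h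

lemma neg_sum_Ico_log_le_neg_log_prod_range (hp : ∀ n, p n ∈ Set.Ioo (0 : ℝ) 1) (m n : ℕ) :
    -∑ t ∈ Finset.Ico m n, Real.log (p t) ≤ -Real.log (∏ i ∈ Finset.range n, p i) := by
  rw [Real.log_prod fun i _ => (hp i).1.ne', ← Finset.sum_neg_distrib, ← Finset.sum_neg_distrib,
    Finset.range_eq_Ico]
  exact Finset.sum_le_sum_of_subset_of_nonneg (Finset.Ico_subset_Ico_left m.zero_le)
    fun i _ _ => neg_nonneg.2 (Real.log_nonpos (hp i).1.le (hp i).2.le)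

lemma exists_neg_log_swPre_le [NeZero D] (hp : ∀ n, p n ∈ Set.Ioo (0 : ℝ) 1) (y : List (Fin D))
    {k : ℕ} {θ : (Fin k → Fin D) → Fin D → ℝ} (hθ : ∀ w a, 0 < θ w a)
    (hsum : ∀ w, ∑ a, θ w a ≤ 1) :
    ∃ A K : ℝ, ∀ n ≥ k + 1, ∀ x : ℕ → Fin D,
      -Real.log (swPre D p y x n) ≤
        A + K * Real.log (y.length + n) - Real.log (∏ i ∈ Finset.range n, p i) +
          ∑ t ∈ Finset.Ico (k + 1) n, -Real.log (θ (contextWord k x t) (x t)) := by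
  obtain ⟨A, K, hMarkov⟩ := exists_sum_neg_log_BpredPre_le k.le_succ y hθ hsum
  obtain ⟨c, hc, hdiag⟩ := exists_pos_le_PpartPre_diagonal hp y k
  refine ⟨A - Real.log c, K, fun n hn x => ?_⟩
  have hp' : ∀ n, p n ∈ Set.Icc (0 : ℝ) 1 := fun n => Set.Ioo_subset_Icc_self (hp n)
  have hfactor : ∀ t, 0 < p t * BpredPre D y (pref x t) (x t) (k + 1) :=
    fun t => mul_pos (hp t).1 (BpredPre_pos _ _ _ _)
  have hprod := Finset.prod_pos fun t (_ : t ∈ Finset.Ico (k + 1) n) => hfactor t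
  have hdominated : c * ∏ t ∈ Finset.Ico (k + 1) n,
      (p t * BpredPre D y (pref x t) (x t) (k + 1)) ≤ swPre D p y x n :=
    (mul_le_mul_of_nonneg_right (hdiag x) hprod.le).trans
      ((PpartPre_mul_prod_le hp' y x k.lt_succ_self hn).trans (PpartPre_le_swPre hp' y x hn))
  have hlog := Real.log_le_log (mul_pos hc hprod) hdominated
  simp_rw [Real.log_mul hc.ne' hprod.ne', Real.log_prod fun t _ => (hfactor t).ne',
    fun t => Real.log_mul (hp t).1.ne' (BpredPre_pos y (pref x t) (x t) (k + 1)).ne',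
    Finset.sum_add_distrib] at hlog
  have hweights := neg_sum_Ico_log_le_neg_log_prod_range hp (k + 1) n
  have hpredict := hMarkov n hn x
  rw [Finset.sum_neg_distrib] at hpredict
  linarith

lemma PpartPre_update_succ (y : List (Fin D)) (x : ℕ → Fin D) {n l : ℕ} (hn : n ≠ 0)
    (hl : l ≤ n + 1) (a : Fin D) :
    PpartPre D p y (Function.update x n a) (n + 1) ((l : ℤ) - 1) =
      (p n * PpartPre D p y x n ((l : ℤ) - 1) + (1 - p n) * PpartPre D p y x n ((l : ℤ) - 1 - 1)) *
        BpredPre D y (pref x n) a l := by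
  have hupdate : ∀ {β : Type} {f : (ℕ → Fin D) → β}, DependsOn f (Set.Iio n) →
      f (Function.update x n a) = f x :=
    fun hf => hf fun i hi => Function.update_of_ne (Set.mem_Iio.1 hi).ne _ _
  rw [PpartPre_succ y _ hn hl, Function.update_self, hupdate (pref_dependsOn n),
    hupdate (PpartPre_dependsOn p y n _), hupdate (PpartPre_dependsOn p y n _)]

lemma sum_swPre_update [NeZero D] (p : ℕ → ℝ) (y : List (Fin D)) (x : ℕ → Fin D) {n : ℕ}
    (hn : n ≠ 0) : ∑ a, swPre D p y (Function.update x n a) (n + 1) = swPre D p y x n := by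
  have hstay : ∑ l ∈ Finset.range (n + 2), PpartPre D p y x n ((l : ℤ) - 1) = swPre D p y x n := by
    rw [Finset.sum_range_succ, PpartPre_eq_zero y x (by right; push_cast; omega), add_zero, swPre]
  have hswitch : ∑ l ∈ Finset.range (n + 2), PpartPre D p y x n ((l : ℤ) - 1 - 1) =
      swPre D p y x n := by
    rw [Finset.sum_range_succ', PpartPre_eq_zero y x (by left; norm_num), add_zero, swPre]
    simp
  have hterm : ∀ l ∈ Finset.range (n + 2),
      ∑ a, PpartPre D p y (Function.update x n a) (n + 1) ((l : ℤ) - 1) =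
        p n * PpartPre D p y x n ((l : ℤ) - 1) +
          (1 - p n) * PpartPre D p y x n ((l : ℤ) - 1 - 1) := by
    intro l hl
    simp_rw [PpartPre_update_succ y x hn (Nat.lt_succ_iff.1 (Finset.mem_range.1 hl)),
      ← Finset.mul_sum, sum_BpredPre, mul_one]
  calc ∑ a, swPre D p y (Function.update x n a) (n + 1)
    _ = ∑ l ∈ Finset.range (n + 2),
          ∑ a, PpartPre D p y (Function.update x n a) (n + 1) ((l : ℤ) - 1) := Finset.sum_comm
    _ = p n * swPre D p y x n + (1 - p n) * swPre D p y x n := by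
        rw [Finset.sum_congr rfl hterm, Finset.sum_add_distrib, ← Finset.mul_sum, ← Finset.mul_sum,
          hstay, hswitch]
    _ = swPre D p y x n := by ring

end SwitchDistribution

section Words

/-- The sequence starting with the word `u` and continuing with zeros; it serves to evaluate on
words a function of sequences that depends on the first `n` coordinates only. -/
noncomputable def wordExt {D : ℕ} [NeZero D] {n : ℕ} (u : Fin n → Fin D) : ℕ → Fin D :=
  Function.extend Fin.val u 0

variable {D : ℕ} [NeZero D]

lemma wordExt_apply {n : ℕ} (u : Fin n → Fin D) (i : Fin n) : wordExt u i = u i :=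
  Fin.val_injective.extend_apply u 0 i

lemma wordExt_snoc {n : ℕ} (w : Fin n → Fin D) (a : Fin D) :
    wordExt (Fin.snoc w a : Fin (n + 1) → Fin D) = Function.update (wordExt w) n a := by
  ext1 i
  rcases lt_trichotomy i n with hi | rfl | hi
  · rw [Function.update_of_ne hi.ne, wordExt_apply w ⟨i, hi⟩]
    exact (wordExt_apply _ (Fin.castSucc ⟨i, hi⟩)).trans
      (Fin.snoc_castSucc (α := fun _ => Fin D) ..)
  · rw [Function.update_self]
    exact (wordExt_apply _ (Fin.last i)).trans (Fin.snoc_last (α := fun _ => Fin D) ..)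
  · have hout : ∀ m ≤ i, ∀ v : Fin m → Fin D, wordExt v i = 0 := fun m hm v =>
      Function.extend_apply' _ _ _ fun ⟨j, hj⟩ => (j.isLt.trans_le hm).ne hj
    rw [Function.update_of_ne hi.ne', hout _ hi, hout _ hi.le]

lemma sum_fin_succ_eq_sum_snoc {α β : Type*} [Fintype α] [AddCommMonoid β] {n : ℕ}
    (f : (Fin (n + 1) → α) → β) : ∑ u, f u = ∑ w : Fin n → α, ∑ a, f (Fin.snoc w a) := by
  rw [← (Fin.snocEquiv (fun _ : Fin (n + 1) => α)).sum_comp, Fintype.sum_prod_type, Finset.sum_comm]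
  rfl

lemma sum_swPre_wordExt (p : ℕ → ℝ) (y : List (Fin D)) {n : ℕ} (hn : n ≠ 0) :
    ∑ u : Fin n → Fin D, swPre D p y (wordExt u) n = 1 := by
  obtain ⟨n, rfl⟩ := Nat.exists_eq_succ_of_ne_zero hn
  induction n with
  | zero =>
    simp only [Nat.succ_eq_add_one, sum_fin_succ_eq_sum_snoc, wordExt_snoc, swPre,
      Finset.sum_range_succ, Finset.sum_range_zero, PpartPre, Function.update_self]
    simp [Finset.sum_add_distrib, ← Finset.mul_sum, sum_BpredPre]
  | succ n ih =>
    simp_rw [sum_fin_succ_eq_sum_snoc (n := n + 1), wordExt_snoc,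
      sum_swPre_update p y _ n.succ_ne_zero]
    exact ih n.succ_ne_zero

end Words

section Blocks

variable {D : ℕ}

/-- The random block `X_1^n`. -/
def block (n : ℕ) (ω : Omega D) : Fin n → Fin D :=
  fun i => path D ω i

/-- The probability `Q(u)` of the word `u`; compared with `Qstr`, it takes a finite word rather
than a sequence of which only the first `n` terms matter. -/
noncomputable def wordProb (Q : Measure (Omega D)) {n : ℕ} (u : Fin n → Fin D) : ℝ :=
  Q.real (block n ⁻¹' {u})

lemma measurable_block (n : ℕ) : Measurable (block n : Omega D → Fin n → Fin D) :=
  measurable_pi_lambda _ fun _ => measurable_pi_apply _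

lemma Qstr_path_eq_wordProb_block (Q : Measure (Omega D)) (n : ℕ) (ω : Omega D) :
    Qstr D Q (path D ω) n = wordProb Q (block n ω) := by
  have hcyl : cylSet D (path D ω) n = block n ⁻¹' {block n ω} :=
    Set.ext fun _ => ⟨fun h => funext fun i => h i i.isLt, fun h i hi => congrFun h ⟨i, hi⟩⟩
  rw [Qstr, hcyl, wordProb, Measure.real]

lemma apply_path_eq_apply_wordExt_block [NeZero D] {β : Type*} {n : ℕ} {f : (ℕ → Fin D) → β}
    (hf : DependsOn f (Set.Iio n)) (ω : Omega D) : f (path D ω) = f (wordExt (block n ω)) :=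
  hf fun i hi => (wordExt_apply (block n ω) ⟨i, hi⟩).symm

lemma wordProb_nonneg (Q : Measure (Omega D)) {n : ℕ} (u : Fin n → Fin D) : 0 ≤ wordProb Q u :=
  measureReal_nonneg

section FiniteMeasure

variable (Q : Measure (Omega D)) [IsFiniteMeasure Q]

lemma integrable_comp_block {n : ℕ} (f : (Fin n → Fin D) → ℝ) :
    Integrable (fun ω => f (block n ω)) Q :=
  (Integrable.of_finite (μ := Q.map (block n)) (f := f)).comp_measurable (measurable_block n)

lemma integral_comp_block {n : ℕ} (f : (Fin n → Fin D) → ℝ) :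
    ∫ ω, f (block n ω) ∂Q = ∑ u, wordProb Q u * f u := by
  rw [← integral_map (measurable_block n).aemeasurable Measurable.of_discrete.aestronglyMeasurable,
    integral_fintype Integrable.of_finite]
  exact Finset.sum_congr rfl fun u _ => by
    rw [smul_eq_mul, map_measureReal_apply (measurable_block n) (measurableSet_singleton u),
      wordProb]

lemma sum_wordProb_snoc {n : ℕ} (w : Fin n → Fin D) :
    ∑ a, wordProb Q (Fin.snoc w a : Fin (n + 1) → Fin D) = wordProb Q w := by
  have hlong := integral_comp_block Q fun v : Fin (n + 1) → Fin D =>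
    if Fin.init v = w then (1 : ℝ) else 0
  have hshort := integral_comp_block Q fun v : Fin n → Fin D => if v = w then (1 : ℝ) else 0
  have hinit : ∀ ω : Omega D, Fin.init (block (n + 1) ω) = block n ω := fun _ => rfl
  simp_rw [hinit] at hlong
  rw [hlong, sum_fin_succ_eq_sum_snoc] at hshort
  simpa only [Fin.init_snoc, mul_ite, mul_one, mul_zero, Finset.sum_ite_irrel,
    Finset.sum_const_zero, Finset.sum_ite_eq', Finset.mem_univ, if_true] using hshort

lemma wordProb_le_wordProb_init {n : ℕ} (v : Fin (n + 1) → Fin D) :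
    wordProb Q v ≤ wordProb Q (Fin.init v) := by
  have hle := Finset.single_le_sum
    (f := fun a => wordProb Q (Fin.snoc (Fin.init v) a : Fin (n + 1) → Fin D))
    (fun a _ => wordProb_nonneg Q _) (Finset.mem_univ (v (Fin.last n)))
  rwa [sum_wordProb_snoc, Fin.snoc_init_self] at hle

end FiniteMeasure

lemma sum_wordProb (Q : Measure (Omega D)) [IsProbabilityMeasure Q] (n : ℕ) :
    ∑ u : Fin n → Fin D, wordProb Q u = 1 := by
  simpa using (integral_comp_block Q fun _ : Fin n → Fin D => (1 : ℝ)).symm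

end Blocks

section Entropy

variable {D : ℕ}

/-- The entropy `H(X_1^n)` of the block of length `n` under `Q`. -/
noncomputable def blockEntropy (Q : Measure (Omega D)) (n : ℕ) : ℝ :=
  ∫ ω, -Real.log (Qstr D Q (path D ω) n) ∂Q

lemma sum_mul_neg_log_le_sum_mul_neg_log {ι : Type*} [Fintype ι] {q r : ι → ℝ}
    (hq : ∀ i, 0 ≤ q i) (hr : ∀ i, 0 < r i) (hsum : ∑ i, r i ≤ ∑ i, q i) :
    ∑ i, q i * -Real.log (q i) ≤ ∑ i, q i * -Real.log (r i) := by
  have hterm : ∀ i, q i * -Real.log (q i) ≤ q i * -Real.log (r i) + (r i - q i) := by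
    intro i
    rcases (hq i).eq_or_lt with hqi | hqi
    · simp [← hqi, (hr i).le]
    · have hlog := mul_le_mul_of_nonneg_left
        (Real.log_le_sub_one_of_pos (div_pos (hr i) hqi)) hqi.le
      rw [Real.log_div (hr i).ne' hqi.ne', mul_sub_one, mul_div_cancel₀ _ hqi.ne'] at hlog
      linarith
  have hle := Finset.sum_le_sum fun i (_ : i ∈ Finset.univ) => hterm i
  rw [Finset.sum_add_distrib, Finset.sum_sub_distrib] at hle
  linarith

lemma blockEntropy_le_integral_neg_log_swPre [NeZero D] {p : ℕ → ℝ}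
    (hp : ∀ n, p n ∈ Set.Ioo (0 : ℝ) 1) (y : List (Fin D)) (Q : Measure (Omega D))
    [IsProbabilityMeasure Q] {n : ℕ} (hn : n ≠ 0) :
    blockEntropy Q n ≤ ∫ ω, -Real.log (swPre D p y (path D ω) n) ∂Q := by
  have hsw := fun ω => apply_path_eq_apply_wordExt_block (swPre_dependsOn p y n) ω
  simp_rw [blockEntropy, Qstr_path_eq_wordProb_block, hsw]
  rw [integral_comp_block Q fun u => -Real.log (wordProb Q u),
    integral_comp_block Q fun u => -Real.log (swPre D p y (wordExt u) n)]
  refine sum_mul_neg_log_le_sum_mul_neg_log (wordProb_nonneg Q)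
    (fun u => swPre_pos hp y (wordExt u) hn) ?_
  rw [sum_swPre_wordExt p y hn, sum_wordProb]

/-- The conditional probability `Q(a | w)` mixed with the uniform distribution, which has weight
`1 - s`, so that no symbol has probability zero. -/
noncomputable def smoothedCond (Q : Measure (Omega D)) (s : ℝ) {k : ℕ} (w : Fin k → Fin D)
    (a : Fin D) : ℝ :=
  s * (wordProb Q (Fin.snoc w a : Fin (k + 1) → Fin D) / wordProb Q w) + (1 - s) / D

lemma smoothedCond_pos (Q : Measure (Omega D)) {s : ℝ} (hs : s ∈ Set.Ioo (0 : ℝ) 1) {k : ℕ}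
    (w : Fin k → Fin D) (a : Fin D) : 0 < smoothedCond Q s w a := by
  have hD : (0 : ℝ) < D := by exact_mod_cast a.pos
  exact add_pos_of_nonneg_of_pos
    (mul_nonneg hs.1.le (div_nonneg (wordProb_nonneg Q _) (wordProb_nonneg Q w)))
    (div_pos (sub_pos.2 hs.2) hD)

lemma sum_smoothedCond_le_one (Q : Measure (Omega D)) [IsFiniteMeasure Q] {s : ℝ}
    (hs : s ∈ Set.Icc (0 : ℝ) 1) {k : ℕ} (w : Fin k → Fin D) : ∑ a, smoothedCond Q s w a ≤ 1 := by
  have huniform : ∑ _a : Fin D, (1 - s) / (D : ℝ) = (1 - s) * (D / D) := by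
    simp only [Finset.sum_const, Finset.card_univ, Fintype.card_fin, nsmul_eq_mul]
    ring
  have hcond := mul_le_mul_of_nonneg_left (div_self_le_one (wordProb Q w)) hs.1
  have hunif := mul_le_mul_of_nonneg_left (div_self_le_one (D : ℝ)) (sub_nonneg.2 hs.2)
  simp only [smoothedCond]
  rw [Finset.sum_add_distrib, ← Finset.mul_sum, ← Finset.sum_div, sum_wordProb_snoc, huniform]
  linarith

lemma neg_log_smoothedCond_le (Q : Measure (Omega D)) [IsFiniteMeasure Q] {s : ℝ}
    (hs : s ∈ Set.Ioc (0 : ℝ) 1) {k : ℕ} {v : Fin (k + 1) → Fin D} (hv : 0 < wordProb Q v) :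
    -Real.log (smoothedCond Q s (Fin.init v) (v (Fin.last k))) ≤
      -Real.log s + -Real.log (wordProb Q v) - -Real.log (wordProb Q (Fin.init v)) := by
  have hinit : 0 < wordProb Q (Fin.init v) := hv.trans_le (wordProb_le_wordProb_init Q v)
  have hle : s * (wordProb Q v / wordProb Q (Fin.init v)) ≤
      smoothedCond Q s (Fin.init v) (v (Fin.last k)) := by
    rw [smoothedCond, Fin.snoc_init_self]
    exact le_add_of_nonneg_right (div_nonneg (sub_nonneg.2 hs.2) (Nat.cast_nonneg D))
  have hlog := Real.log_le_log (mul_pos hs.1 (div_pos hv hinit)) hle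
  rw [Real.log_mul hs.1.ne' (div_pos hv hinit).ne', Real.log_div hv.ne' hinit.ne'] at hlog
  linarith

lemma integral_neg_log_smoothedCond_le (Q : Measure (Omega D)) [IsProbabilityMeasure Q] {s : ℝ}
    (hs : s ∈ Set.Ioc (0 : ℝ) 1) (k : ℕ) :
    ∫ ω, -Real.log (smoothedCond Q s (block k ω) (path D ω k)) ∂Q ≤
      -Real.log s + blockEntropy Q (k + 1) - blockEntropy Q k := by
  have hsmoothed := integral_comp_block Q fun v : Fin (k + 1) → Fin D =>
    -Real.log (smoothedCond Q s (Fin.init v) (v (Fin.last k)))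
  have hlong := integral_comp_block Q fun v : Fin (k + 1) → Fin D => -Real.log (wordProb Q v)
  have hshort := integral_comp_block Q fun v : Fin (k + 1) → Fin D =>
    -Real.log (wordProb Q (Fin.init v))
  have hs_sum : -Real.log s = ∑ v : Fin (k + 1) → Fin D, wordProb Q v * -Real.log s := by
    rw [← Finset.sum_mul, sum_wordProb, one_mul]
  simp_rw [blockEntropy, Qstr_path_eq_wordProb_block]
  refine (hsmoothed.trans_le ?_).trans_eq
    (congrArg₂ (· - ·) (congrArg₂ (· + ·) hs_sum hlong) hshort).symm
  rw [← Finset.sum_add_distrib, ← Finset.sum_sub_distrib]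
  refine Finset.sum_le_sum fun v _ => ?_
  rcases (wordProb_nonneg Q v).eq_or_lt with hv | hv
  · simp [← hv]
  · rw [← mul_add, ← mul_sub]
    exact mul_le_mul_of_nonneg_left (neg_log_smoothedCond_le Q hs hv) hv.le

end Entropy

section Stationarity

variable {D : ℕ}

lemma shiftT_iterate_apply (m : ℕ) (ω : Omega D) (i : ℤ) : (shiftT D)^[m] ω i = ω (i + m) := by
  induction m generalizing ω with
  | zero => simp
  | succ m ih =>
    rw [Function.iterate_succ_apply, ih, shiftT]
    congr 1
    push_cast
    ring

lemma path_shiftT_iterate (m : ℕ) (ω : Omega D) (i : ℕ) :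
    path D ((shiftT D)^[m] ω) i = path D ω (m + i) := by
  rw [path, path, shiftT_iterate_apply]
  congr 1
  push_cast
  ring

lemma contextWord_path_eq_block_shiftT_iterate (k t : ℕ) (ω : Omega D) :
    contextWord k (path D ω) t = block k ((shiftT D)^[t - k] ω) :=
  funext fun i => (path_shiftT_iterate (t - k) ω i).symm

lemma integrable_comp_block_path (Q : Measure (Omega D)) [IsFiniteMeasure Q] {k : ℕ}
    (f : (Fin k → Fin D) → Fin D → ℝ) : Integrable (fun ω => f (block k ω) (path D ω k)) Q :=
  integrable_comp_block Q fun v : Fin (k + 1) → Fin D => f (Fin.init v) (v (Fin.last k))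

variable {Q : Measure (Omega D)} [IsFiniteMeasure Q]

lemma integrable_comp_contextWord (hstat : MeasurePreserving (shiftT D) Q Q) {k t : ℕ}
    (hkt : k ≤ t) (f : (Fin k → Fin D) → Fin D → ℝ) :
    Integrable (fun ω => f (contextWord k (path D ω) t) (path D ω t)) Q := by
  simpa only [Function.comp_def, contextWord_path_eq_block_shiftT_iterate, path_shiftT_iterate,
    Nat.sub_add_cancel hkt] using
    (hstat.iterate (t - k)).integrable_comp_of_integrable (integrable_comp_block_path Q f)

lemma integral_comp_contextWord (hstat : MeasurePreserving (shiftT D) Q Q) {k t : ℕ}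
    (hkt : k ≤ t) (f : (Fin k → Fin D) → Fin D → ℝ) :
    ∫ ω, f (contextWord k (path D ω) t) (path D ω t) ∂Q =
      ∫ ω, f (block k ω) (path D ω k) ∂Q := by
  have hshift := hstat.iterate (t - k)
  have hmap := integral_map (f := fun ω => f (block k ω) (path D ω k)) hshift.aemeasurable
    (hshift.map_eq.symm ▸ (integrable_comp_block_path Q f).aestronglyMeasurable)
  simpa only [hshift.map_eq, contextWord_path_eq_block_shiftT_iterate, path_shiftT_iterate,
    Nat.sub_add_cancel hkt] using hmap.symm

end Stationarity

section Universality

variable {D : ℕ} {p : ℕ → ℝ}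

lemma integrable_neg_log_swPre [NeZero D] (p : ℕ → ℝ) (y : List (Fin D)) (Q : Measure (Omega D))
    [IsFiniteMeasure Q] (n : ℕ) : Integrable (fun ω => -Real.log (swPre D p y (path D ω) n)) Q := by
  simp_rw [fun ω => apply_path_eq_apply_wordExt_block (swPre_dependsOn p y n) ω]
  exact integrable_comp_block Q fun u => -Real.log (swPre D p y (wordExt u) n)

lemma exists_integral_neg_log_swPre_le [NeZero D] (hp : ∀ n, p n ∈ Set.Ioo (0 : ℝ) 1)
    (y : List (Fin D)) {Q : Measure (Omega D)} [IsProbabilityMeasure Q]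
    (hstat : MeasurePreserving (shiftT D) Q Q) {k : ℕ} {θ : (Fin k → Fin D) → Fin D → ℝ}
    (hθ : ∀ w a, 0 < θ w a) (hsum : ∀ w, ∑ a, θ w a ≤ 1) :
    ∃ A K : ℝ, ∀ n ≥ k + 1, ∫ ω, -Real.log (swPre D p y (path D ω) n) ∂Q ≤
      A + K * Real.log (y.length + n) - Real.log (∏ i ∈ Finset.range n, p i) +
        n * ∫ ω, -Real.log (θ (block k ω) (path D ω k)) ∂Q := by
  obtain ⟨A, K, hpointwise⟩ := exists_neg_log_swPre_le hp y hθ hsum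
  set C := ∫ ω, -Real.log (θ (block k ω) (path D ω k)) ∂Q
  refine ⟨A - (k + 1) * C, K, fun n hn => ?_⟩
  have hint : ∀ t ∈ Finset.Ico (k + 1) n,
      Integrable (fun ω => -Real.log (θ (contextWord k (path D ω) t) (path D ω t))) Q :=
    fun t ht => integrable_comp_contextWord hstat (k.le_succ.trans (Finset.mem_Ico.1 ht).1)
      fun w a => -Real.log (θ w a)
  have hsame : ∀ t ∈ Finset.Ico (k + 1) n,
      ∫ ω, -Real.log (θ (contextWord k (path D ω) t) (path D ω t)) ∂Q = C :=
    fun t ht => integral_comp_contextWord hstat (k.le_succ.trans (Finset.mem_Ico.1 ht).1)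
      fun w a => -Real.log (θ w a)
  have hmono := integral_mono (integrable_neg_log_swPre p y Q n)
    ((integrable_const _).add (integrable_finsetSum _ hint)) fun ω => hpointwise n hn (path D ω)
  simp only [Pi.add_apply] at hmono
  rw [integral_add (integrable_const _) (integrable_finsetSum _ hint), integral_finsetSum _ hint,
    Finset.sum_congr rfl hsame, integral_const, probReal_univ, one_smul, Finset.sum_const,
    Nat.card_Ico, nsmul_eq_mul, Nat.cast_sub hn] at hmono
  push_cast at hmono
  linarith

lemma exists_succ_sub_lt_of_tendsto_div {u : ℕ → ℝ} {l b : ℝ}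
    (hu : Tendsto (fun n : ℕ => u n / n) atTop (𝓝 l)) (hb : l < b) :
    ∃ k, u (k + 1) - u k < b := by
  by_contra! hinc
  have hlinear : ∀ n : ℕ, u 0 + n * b ≤ u n := by
    intro n
    induction n with
    | zero => simp
    | succ n ih =>
      have hstep := hinc n
      push_cast
      linarith
  have hlower : Tendsto (fun n : ℕ => u 0 / n + b) atTop (𝓝 b) := by
    simpa using (tendsto_const_div_atTop_nhds_zero_nat (u 0)).add_const b
  refine hb.not_ge (le_of_tendsto_of_tendsto hlower hu ?_)
  filter_upwards [eventually_gt_atTop 0] with n hn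
  have hn : (0 : ℝ) < n := by exact_mod_cast hn
  rw [le_div_iff₀ hn, add_mul, div_mul_cancel₀ _ hn.ne']
  linarith [hlinear n]

lemma tendsto_log_const_add_div_atTop (c : ℝ) :
    Tendsto (fun n : ℕ => Real.log (c + n) / n) atTop (𝓝 0) := by
  have hlog : (fun n : ℕ => Real.log (c + n)) =o[atTop] fun n : ℕ => c + (n : ℝ) :=
    Real.isLittleO_log_id_atTop.comp_tendsto
      (tendsto_atTop_add_const_left _ c tendsto_natCast_atTop_atTop)
  have hconst : (fun _ : ℕ => c) =o[atTop] fun n : ℕ => (n : ℝ) :=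
    Asymptotics.isLittleO_const_left.2 (Or.inr (tendsto_norm_atTop_atTop.comp
      tendsto_natCast_atTop_atTop))
  exact (hlog.trans_isBigO (hconst.isBigO.add (Asymptotics.isBigO_refl _ _))).tendsto_div_nhds_zero

lemma tendsto_codeLength_bound_div {w : ℕ → ℝ}
    (hw : Tendsto (fun n : ℕ => w n / n) atTop (𝓝 0)) (A K c C : ℝ) :
    Tendsto (fun n : ℕ => (A + K * Real.log (c + n) - w n + n * C) / n) atTop (𝓝 C) := by
  have hlim := (((tendsto_const_div_atTop_nhds_zero_nat A).add
    ((tendsto_log_const_add_div_atTop c).const_mul K)).sub hw).add_const C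
  rw [mul_zero, add_zero, sub_zero, zero_add] at hlim
  refine hlim.congr' ?_
  filter_upwards [eventually_ne_atTop 0] with n hn
  field_simp

lemma eventually_integral_neg_log_swPre_div_lt [NeZero D] (hp : ∀ n, p n ∈ Set.Ioo (0 : ℝ) 1)
    (hlogp : Tendsto (fun n : ℕ => Real.log (∏ i ∈ Finset.range n, p i) / n) atTop (𝓝 0))
    (y : List (Fin D)) {Q : Measure (Omega D)} [IsProbabilityMeasure Q]
    (hstat : MeasurePreserving (shiftT D) Q Q) {k : ℕ} {b : ℝ}
    (hb : blockEntropy Q (k + 1) - blockEntropy Q k < b) :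
    ∀ᶠ n : ℕ in atTop, (∫ ω, -Real.log (swPre D p y (path D ω) n) ∂Q) / n < b := by
  obtain ⟨η, hη, hηb⟩ : ∃ η > 0, η + blockEntropy Q (k + 1) - blockEntropy Q k < b :=
    ⟨(b - (blockEntropy Q (k + 1) - blockEntropy Q k)) / 2, by linarith, by linarith⟩
  have hs : Real.exp (-η) ∈ Set.Ioo (0 : ℝ) 1 :=
    ⟨Real.exp_pos _, Real.exp_lt_one_iff.2 (neg_neg_of_pos hη)⟩
  have hC := integral_neg_log_smoothedCond_le Q (Set.Ioo_subset_Ioc_self hs) k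
  rw [Real.log_exp, neg_neg] at hC
  obtain ⟨A, K, hbound⟩ := exists_integral_neg_log_swPre_le hp y hstat
    (smoothedCond_pos Q hs) (sum_smoothedCond_le_one Q (Set.Ioo_subset_Icc_self hs) (k := k))
  filter_upwards [(tendsto_codeLength_bound_div hlogp A K y.length _).eventually_lt_const
    (hC.trans_lt hηb), eventually_ge_atTop (k + 1)] with n hlt hn
  exact (div_le_div_of_nonneg_right (hbound n hn) n.cast_nonneg).trans_lt hlt

lemma tendsto_log_prod_div_of_tendsto_prod {L : ℝ} (hL : 0 < L)
    (hprod : Tendsto (fun N : ℕ => ∏ i ∈ Finset.range N, p i) atTop (𝓝 L)) :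
    Tendsto (fun n : ℕ => Real.log (∏ i ∈ Finset.range n, p i) / n) atTop (𝓝 0) :=
  (hprod.log hL.ne').div_atTop tendsto_natCast_atTop_atTop

theorem preadapted_switch_weakly_universal_general
    (D : ℕ) (y : List (Fin D)) (p : ℕ → ℝ) (hp : ∀ n, p n ∈ Set.Ioo (0 : ℝ) 1)
    (hlogp : Tendsto (fun n : ℕ => Real.log (∏ i ∈ Finset.range n, p i) / n) atTop (𝓝 0))
    (Q : Measure (Omega D)) [IsProbabilityMeasure Q]
    (hstat : MeasurePreserving (shiftT D) Q Q) (hQ : ℝ)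
    (hent : Tendsto
      (fun n : ℕ => (∫ ω, -Real.log (Qstr D Q (path D ω) n) ∂Q) / n) atTop (𝓝 hQ)) :
    Tendsto (fun n : ℕ => (∫ ω, -Real.log (swPre D p y (path D ω) n) ∂Q) / n) atTop
      (𝓝 hQ) := by
  obtain ⟨ω⟩ := nonempty_of_isProbabilityMeasure Q
  have : NeZero D := ⟨(ω 0).pos.ne'⟩
  refine tendsto_order.2 ⟨fun b hb => ?_, fun b hb => ?_⟩
  · filter_upwards [hent.eventually_const_lt hb, eventually_ne_atTop 0] with n hlt hn
    exact hlt.trans_le (div_le_div_of_nonneg_right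
      (blockEntropy_le_integral_neg_log_swPre hp y Q hn) n.cast_nonneg)
  · obtain ⟨k, hk⟩ : ∃ k, blockEntropy Q (k + 1) - blockEntropy Q k < b :=
      exists_succ_sub_lt_of_tendsto_div hent hb
    exact eventually_integral_neg_log_swPre_div_lt hp hlogp y hstat hk

end Universality

/-- The preadapted switch distribution is weakly universal: for every stationary
probability measure `Q` on `Ω = {1,...,D}^ℤ`,
`lim_{n→∞} (1/n)·E_Q[−log P(X_1^n)] = h_Q`, where `h_Q` is the entropy rate of `Q`. -/
theorem preadapted_switch_weakly_universal
    (D : ℕ) (hD : 2 ≤ D) (y : List (Fin D))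
    (p : ℕ → ℝ) (hp : ∀ n, p n ∈ Set.Ioo (0 : ℝ) 1)
    (hprod : ∃ L, 0 < L ∧ Tendsto (fun N : ℕ => ∏ i ∈ Finset.range N, p i) atTop (𝓝 L))
    (Q : Measure (Omega D)) [IsProbabilityMeasure Q]
    (hstat : MeasurePreserving (shiftT D) Q Q)
    (hQ : ℝ)
    (hent : Tendsto
      (fun n : ℕ => (∫ ω, -Real.log (Qstr D Q (path D ω) n) ∂Q) / n) atTop (𝓝 hQ)) :
    Tendsto (fun n : ℕ => (∫ ω, -Real.log (swPre D p y (path D ω) n) ∂Q) / n) atTop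
      (𝓝 hQ) := by
  obtain ⟨L, hL, hlim⟩ := hprod
  exact preadapted_switch_weakly_universal_general D y p hp
    (tendsto_log_prod_div_of_tendsto_prod hL hlim) Q hstat hQ hent
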